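/- Let ψ satisfy Assumptions 1 and 2, let θ > θ_∞ and h > 0, and define f(t) = γ_θ(b^θ(h−t)) · exp( −∫_0^t γ_θ(b^θ(h−r)) dr ) for t ∈ [0,h). Then f is a probability density on [0,h) with respect to Lebesgue measure, i.e. ∫_0^h f(t) dt = 1; moreover ∫_0^h e^{−ψ'(θ) t} f(t) dt < ∞ (where ψ'(θ) is the derivative of ψ at θ, which may be negative). -/

import Mathlib

/-!
Write `g = ψ_θ`, `u t = b (h - t)` and `k t = γ_θ (u t)`. Since `b` inverts the tail integral
`y ↦ ∫_y^∞ dr / g r`, it solves `b' = -g (b)` and blows up at `0` (`tailInverse_spec`); hence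
`u' = g (u)` on `(-∞, h)` and `u → ∞` at `h`. As `γ_θ (r) = g' (r) - ψ' (θ)`, it follows that
`k` is the derivative of `H t = log (g (u t)) - ψ' (θ) t`, so the function in the theorem,
`k t * exp (-∫_0^t k)`, is the derivative of `-exp (H 0 - H t)`, which is `-1` at `0`.

Two properties of `ψ` finish the argument. It is convex and `C¹` to the right of any point of
`ThetaPrime` (`hasDerivAt_psi`, `continuousAt_deriv_psi`, `monotoneOn_deriv_psi`), which makes `k`
continuous and nonnegative. By Grey's condition it tends to infinity (`tendsto_psi_atTop`), so
`H → ∞` at `h` and the total mass is `0 - (-1) = 1` (`hazard_density`). The exponential moment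
is finite because `exp (-ψ' (θ) t)` is bounded on the bounded interval `(0, h)`.
-/

open Set Filter

/-- The branching mechanism
`ψ(λ) = αλ + βλ² + ∫_{(0,∞)} (e^{-λx} - 1 + λx 1_{x<1}) Π(dx)`. -/
noncomputable def psi (α β : ℝ) (ν : MeasureTheory.Measure ℝ) (l : ℝ) : ℝ :=
  α * l + β * l ^ 2 +
    ∫ x, (Real.exp (-(l * x)) - 1 + (if x < 1 then l * x else 0)) ∂ν

/-- `ν` is a Lévy measure on `(0,∞)`: it puts no mass on `(-∞,0]` and integrates
`1 ∧ x²`. -/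
def IsLevyMeasure (ν : MeasureTheory.Measure ℝ) : Prop :=
  ν (Set.Iic 0) = 0 ∧ ∫⁻ x, ENNReal.ofReal (min 1 (x ^ 2)) ∂ν ≠ ⊤

/-- The set `Θ' = {θ ∈ ℝ : ∫_{(1,∞)} e^{-θx} Π(dx) < ∞}`. -/
def ThetaPrime (ν : MeasureTheory.Measure ℝ) : Set ℝ :=
  {θ : ℝ | ∫⁻ x in Set.Ioi 1, ENNReal.ofReal (Real.exp (-(θ * x))) ∂ν ≠ ⊤}

/-- `θ_∞ = inf Θ'` (as an extended real, possibly `-∞`). -/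
noncomputable def thetaInf (ν : MeasureTheory.Measure ℝ) : EReal :=
  ⨅ θ ∈ ThetaPrime ν, (θ : EReal)

/-- The shifted branching mechanism `ψ_θ(λ) = ψ(λ+θ) - ψ(θ)`. -/
noncomputable def psiShift (α β : ℝ) (ν : MeasureTheory.Measure ℝ) (θ l : ℝ) : ℝ :=
  psi α β ν (l + θ) - psi α β ν θ

/-- `γ_θ(λ) = ψ'(λ+θ) - ψ'(θ)`. -/
noncomputable def gammaTheta (α β : ℝ) (ν : MeasureTheory.Measure ℝ) (θ l : ℝ) : ℝ :=
  deriv (psi α β ν) (l + θ) - deriv (psi α β ν) θ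

/-- `q_θ = sup({0} ∪ {r > 0 : ψ_θ(r) ≤ 0})`, the largest root region of `ψ_θ`. -/
noncomputable def qTheta (α β : ℝ) (ν : MeasureTheory.Measure ℝ) (θ : ℝ) : ℝ :=
  sSup ({0} ∪ {r : ℝ | 0 < r ∧ psiShift α β ν θ r ≤ 0})

/-- Assumption 1: `ψ` is conservative (`∫_{0+} du/|ψ(u)| = ∞`) and `β > 0` or
`∫_{(0,1)} x Π(dx) = ∞`. -/
def Assumption1 (α β : ℝ) (ν : MeasureTheory.Measure ℝ) : Prop :=
  (∀ ε > (0:ℝ), ∫⁻ u in Set.Ioc (0:ℝ) ε, ENNReal.ofReal (1 / |psi α β ν u|) = ⊤) ∧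
  (0 < β ∨ ∫⁻ x in Set.Ioo (0:ℝ) 1, ENNReal.ofReal x ∂ν = ⊤)

/-- Assumption 2 (Grey condition): `ψ(u) > 0` for large `u` and `∫^∞ du/ψ(u) < ∞`. -/
def Assumption2 (α β : ℝ) (ν : MeasureTheory.Measure ℝ) : Prop :=
  ∃ M : ℝ, (∀ u, M ≤ u → 0 < psi α β ν u) ∧
    ∫⁻ u in Set.Ioi M, ENNReal.ofReal (1 / psi α β ν u) ≠ ⊤

/-- `ψ` is critical: its right derivative at `0` vanishes (`ψ(0) = 0`, so
`ψ'(0+) = lim_{λ↓0} ψ(λ)/λ`). -/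
def IsCritical (α β : ℝ) (ν : MeasureTheory.Measure ℝ) : Prop :=
  Filter.Tendsto (fun l => psi α β ν l / l) (nhdsWithin 0 (Set.Ioi 0)) (nhds 0)

open MeasureTheory Topology

/-! ### Regularity of the branching mechanism on the interior of its domain -/

theorem real_exp_sub_one_bound (y : ℝ) : |Real.exp y - 1| ≤ |y| * Real.exp |y| := by
  have h := Complex.norm_exp_sub_sum_le_norm_mul_exp (y : ℂ) 1
  simp only [Finset.range_one, Finset.sum_singleton, pow_zero, Nat.factorial_zero, Nat.cast_one,
    div_one, pow_one, Complex.norm_real, Real.norm_eq_abs] at h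
  rw [← Complex.ofReal_exp, ← Complex.ofReal_one, ← Complex.ofReal_sub, Complex.norm_real,
    Real.norm_eq_abs] at h
  exact h

theorem real_exp_sub_one_sub_id_bound (y : ℝ) :
    |Real.exp y - 1 - y| ≤ y ^ 2 * Real.exp |y| := by
  have h := Complex.norm_exp_sub_sum_le_norm_mul_exp (y : ℂ) 2
  simp only [Finset.sum_range_succ, Finset.range_zero, Finset.sum_empty, zero_add, pow_zero,
    Nat.factorial_zero, Nat.factorial_one, Nat.cast_one, div_one, pow_one, Complex.norm_real,
    Real.norm_eq_abs] at h
  rw [← Complex.ofReal_exp, ← Complex.ofReal_one, ← Complex.ofReal_add, ← Complex.ofReal_sub,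
    Complex.norm_real, Real.norm_eq_abs, sq_abs] at h
  rwa [sub_sub]

/-- The integrand of the Lévy integral in `psi`. -/
noncomputable def levyTerm (l x : ℝ) : ℝ :=
  Real.exp (-(l * x)) - 1 + (if x < 1 then l * x else 0)

/-- The `l`-derivative of `levyTerm l x`. -/
noncomputable def levyTermDeriv (l x : ℝ) : ℝ :=
  -x * Real.exp (-(l * x)) + (if x < 1 then x else 0)

/-- A weight integrable against `ν` when `θ₀ ∈ ThetaPrime ν`; it dominates, up to a constant and
locally uniformly in `l > θ₀`, both `levyTerm l` and `levyTermDeriv l`. -/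
noncomputable def levyWeight (θ₀ x : ℝ) : ℝ :=
  min 1 (x ^ 2) + (Ioi (1 : ℝ)).indicator (fun x => Real.exp (-(θ₀ * x))) x

theorem levyWeight_integrable {ν : Measure ℝ} (hν : IsLevyMeasure ν) {θ₀ : ℝ}
    (hθ₀ : θ₀ ∈ ThetaPrime ν) : Integrable (levyWeight θ₀) ν := by
  refine Integrable.add ?_ ?_
  · refine ⟨by fun_prop, ?_⟩
    rw [hasFiniteIntegral_iff_ofReal (Eventually.of_forall fun x => by positivity)]
    exact lt_top_iff_ne_top.2 hν.2
  · rw [integrable_indicator_iff measurableSet_Ioi]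
    refine ⟨by fun_prop, ?_⟩
    rw [hasFiniteIntegral_iff_ofReal (Eventually.of_forall fun x => by positivity)]
    exact lt_top_iff_ne_top.2 hθ₀

theorem levyWeight_of_lt_one {θ₀ x : ℝ} (hx : 0 < x) (hx1 : x < 1) : levyWeight θ₀ x = x ^ 2 := by
  have : x ^ 2 ≤ 1 := by nlinarith
  simp [levyWeight, indicator, not_lt.2 hx1.le, this]

theorem one_le_levyWeight {θ₀ x : ℝ} (hx1 : 1 ≤ x) : 1 ≤ levyWeight θ₀ x := by
  have h : (1 : ℝ) ≤ x ^ 2 := by nlinarith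
  have h' : 0 ≤ (Ioi (1 : ℝ)).indicator (fun x => Real.exp (-(θ₀ * x))) x :=
    indicator_nonneg (fun _ _ => (Real.exp_pos _).le) x
  rw [levyWeight, min_eq_left h]
  linarith

theorem exp_le_levyWeight {θ₀ x : ℝ} (hx1 : 1 ≤ x) :
    Real.exp (-(θ₀ * x)) ≤ (1 + Real.exp (-θ₀)) * levyWeight θ₀ x := by
  have h : (1 : ℝ) ≤ x ^ 2 := by nlinarith
  have h0 := Real.exp_pos (-θ₀)
  have hx := Real.exp_pos (-(θ₀ * x))
  rw [levyWeight, min_eq_left h]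
  rcases hx1.eq_or_lt with rfl | hx1
  · simp
  · rw [indicator_of_mem (by exact hx1)]
    nlinarith [mul_pos h0 hx]

theorem levyTerm_bound {θ₀ l x : ℝ} (hl : θ₀ < l) (hx : 0 < x) :
    ‖levyTerm l x‖ ≤
      (l ^ 2 * Real.exp |l| + (1 + Real.exp (-θ₀)) + 1) * levyWeight θ₀ x := by
  rw [Real.norm_eq_abs]
  have hc : 0 ≤ l ^ 2 * Real.exp |l| := by positivity
  have h0 := Real.exp_pos (-θ₀)
  rcases lt_or_ge x 1 with hx1 | hx1
  · rw [levyWeight_of_lt_one hx hx1]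
    have h := real_exp_sub_one_sub_id_bound (-(l * x))
    have e : Real.exp |(-(l * x))| ≤ Real.exp |l| := by
      rw [abs_neg, abs_mul, abs_of_pos hx]
      gcongr
      nlinarith [abs_nonneg l]
    have hL : levyTerm l x = Real.exp (-(l * x)) - 1 - -(l * x) := by
      rw [levyTerm, if_pos hx1]; ring
    rw [hL]
    calc _ ≤ _ := h
      _ ≤ (-(l * x)) ^ 2 * Real.exp |l| := by gcongr
      _ = l ^ 2 * Real.exp |l| * x ^ 2 := by ring
      _ ≤ _ := by gcongr; linarith
  · have hw := one_le_levyWeight (θ₀ := θ₀) hx1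
    have he := exp_le_levyWeight (θ₀ := θ₀) hx1
    have hle : Real.exp (-(l * x)) ≤ Real.exp (-(θ₀ * x)) := by
      gcongr
    rw [levyTerm, if_neg (not_lt.2 hx1), add_zero]
    have : |Real.exp (-(l * x)) - 1| ≤ Real.exp (-(l * x)) + 1 := by
      have := Real.exp_pos (-(l * x))
      rw [abs_le]; constructor <;> linarith
    nlinarith [mul_nonneg hc (zero_le_one.trans hw)]

/-- Domination of the derivative, uniform over bounded subsets of `[s, ∞)` for `s > θ₀`: the
factor `x` is absorbed by the gap `s - θ₀` in the exponent. -/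
theorem levyTermDeriv_bound {θ₀ s l C x : ℝ} (hs : θ₀ < s) (hl : s ≤ l) (hC : |l| ≤ C)
    (hx : 0 < x) :
    ‖levyTermDeriv l x‖ ≤
      (C * Real.exp C + (s - θ₀)⁻¹ * (1 + Real.exp (-θ₀))) * levyWeight θ₀ x := by
  rw [Real.norm_eq_abs]
  have hC0 : 0 ≤ C := (abs_nonneg l).trans hC
  have hs' : 0 < s - θ₀ := sub_pos.2 hs
  rcases lt_or_ge x 1 with hx1 | hx1
  · rw [levyWeight_of_lt_one hx hx1]
    have h := real_exp_sub_one_bound (-(l * x))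
    have hlx : |(-(l * x))| = |l| * x := by rw [abs_neg, abs_mul, abs_of_pos hx]
    rw [hlx] at h
    have hL : levyTermDeriv l x = -x * (Real.exp (-(l * x)) - 1) := by
      rw [levyTermDeriv, if_pos hx1]; ring
    rw [hL, abs_mul, abs_neg, abs_of_pos hx]
    have e : |l| * x ≤ C := by nlinarith [abs_nonneg l]
    calc _ ≤ x * (|l| * x * Real.exp (|l| * x)) := by gcongr
      _ ≤ x * (C * x * Real.exp C) := by gcongr
      _ = C * Real.exp C * x ^ 2 := by ring
      _ ≤ _ := by
        gcongr
        have : 0 ≤ (s - θ₀)⁻¹ * (1 + Real.exp (-θ₀)) := by positivity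
        linarith
  · have hw := one_le_levyWeight (θ₀ := θ₀) hx1
    have he := exp_le_levyWeight (θ₀ := θ₀) hx1
    have hxe : x ≤ (s - θ₀)⁻¹ * Real.exp ((s - θ₀) * x) := by
      rw [inv_mul_eq_div, le_div_iff₀ hs']
      have := Real.add_one_le_exp ((s - θ₀) * x)
      linarith
    rw [levyTermDeriv, if_neg (not_lt.2 hx1), add_zero, abs_mul, abs_neg, abs_of_pos hx,
      abs_of_pos (Real.exp_pos _)]
    calc _ ≤ (s - θ₀)⁻¹ * Real.exp ((s - θ₀) * x) * Real.exp (-(s * x)) := by gcongr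
      _ = (s - θ₀)⁻¹ * Real.exp (-(θ₀ * x)) := by
        rw [mul_assoc, ← Real.exp_add]; ring_nf
      _ ≤ (s - θ₀)⁻¹ * ((1 + Real.exp (-θ₀)) * levyWeight θ₀ x) := by gcongr
      _ ≤ _ := by
        have : 0 ≤ C * Real.exp C * levyWeight θ₀ x := by
          have := zero_le_one.trans hw
          positivity
        linarith

theorem measurable_levyTerm (l : ℝ) : Measurable (levyTerm l) := by
  unfold levyTerm
  exact Measurable.add (by fun_prop)
    (Measurable.ite measurableSet_Iio (by fun_prop) (by fun_prop))

theorem measurable_levyTermDeriv (l : ℝ) : Measurable (levyTermDeriv l) := by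
  unfold levyTermDeriv
  exact Measurable.add (by fun_prop)
    (Measurable.ite measurableSet_Iio (by fun_prop) (by fun_prop))

theorem hasDerivAt_levyTerm (l x : ℝ) :
    HasDerivAt (fun l => levyTerm l x) (levyTermDeriv l x) l := by
  unfold levyTerm levyTermDeriv
  have h1 : HasDerivAt (fun l : ℝ => Real.exp (-(l * x)) - 1) (-x * Real.exp (-(l * x))) l := by
    have := (((hasDerivAt_id l).mul_const x).neg.exp).sub_const 1
    simpa [mul_comm] using this
  split_ifs
  · exact h1.add (by simpa using (hasDerivAt_id l).mul_const x)
  · exact h1.add (hasDerivAt_const l 0)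

theorem ae_pos_of_isLevyMeasure {ν : Measure ℝ} (hν : IsLevyMeasure ν) : ∀ᵐ x ∂ν, 0 < x := by
  rw [ae_iff]
  simp only [not_lt]
  exact hν.1

/-- The domination bound, in the form needed near a point `l > θ₀`. -/
theorem levyTermDeriv_dominated {ν : Measure ℝ} (hν : IsLevyMeasure ν) {θ₀ : ℝ}
    (hθ₀ : θ₀ ∈ ThetaPrime ν) {l : ℝ} (hl : θ₀ < l) :
    ∃ S ∈ 𝓝 l, ∃ B : ℝ → ℝ, Integrable B ν ∧ ∀ᵐ x ∂ν, ∀ m ∈ S, ‖levyTermDeriv m x‖ ≤ B x := by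
  set s := (θ₀ + l) / 2 with hs
  set C := |s| + |l + 1| with hC
  refine ⟨Ioo s (l + 1), Ioo_mem_nhds (by linarith) (by linarith),
    fun x => (C * Real.exp C + (s - θ₀)⁻¹ * (1 + Real.exp (-θ₀))) * levyWeight θ₀ x,
    (levyWeight_integrable hν hθ₀).const_mul _, ?_⟩
  filter_upwards [ae_pos_of_isLevyMeasure hν] with x hx m hm
  refine levyTermDeriv_bound (by linarith) hm.1.le ?_ hx
  exact abs_le.2 ⟨by linarith [neg_abs_le s, abs_nonneg (l + 1), hm.1],
    by linarith [le_abs_self (l + 1), abs_nonneg s, hm.2]⟩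

theorem integrable_levyTermDeriv {ν : Measure ℝ} (hν : IsLevyMeasure ν) {θ₀ : ℝ}
    (hθ₀ : θ₀ ∈ ThetaPrime ν) {l : ℝ} (hl : θ₀ < l) : Integrable (levyTermDeriv l) ν := by
  obtain ⟨S, hS, B, hB, hSB⟩ := levyTermDeriv_dominated hν hθ₀ hl
  refine hB.mono' (measurable_levyTermDeriv l).aestronglyMeasurable ?_
  filter_upwards [hSB] with x hx using hx l (mem_of_mem_nhds hS)

/-- Differentiation under the Lévy integral. -/
theorem hasDerivAt_psi (α β : ℝ) {ν : Measure ℝ} (hν : IsLevyMeasure ν) {θ₀ : ℝ}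
    (hθ₀ : θ₀ ∈ ThetaPrime ν) {l : ℝ} (hl : θ₀ < l) :
    HasDerivAt (psi α β ν) (α + 2 * β * l + ∫ x, levyTermDeriv l x ∂ν) l := by
  obtain ⟨S, hS, B, hB, hSB⟩ := levyTermDeriv_dominated hν hθ₀ hl
  have hF : Integrable (levyTerm l) ν := by
    refine ((levyWeight_integrable hν hθ₀).const_mul
      (l ^ 2 * Real.exp |l| + (1 + Real.exp (-θ₀)) + 1)).mono'
      (measurable_levyTerm l).aestronglyMeasurable ?_
    filter_upwards [ae_pos_of_isLevyMeasure hν] with x hx using levyTerm_bound hl hx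
  have key := (hasDerivAt_integral_of_dominated_loc_of_deriv_le (F := levyTerm) hS
    (Eventually.of_forall fun m => (measurable_levyTerm m).aestronglyMeasurable) hF
    (measurable_levyTermDeriv l).aestronglyMeasurable hSB hB
    (Eventually.of_forall fun x m _ => hasDerivAt_levyTerm m x)).2
  have h2 : HasDerivAt (fun l : ℝ => α * l + β * l ^ 2) (α + 2 * β * l) l := by
    have := ((hasDerivAt_id l).const_mul α).add ((hasDerivAt_pow 2 l).const_mul β)
    refine this.congr_deriv ?_
    norm_num
    ring
  exact h2.add key

theorem continuousAt_deriv_psi (α β : ℝ) {ν : Measure ℝ} (hν : IsLevyMeasure ν) {θ₀ : ℝ}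
    (hθ₀ : θ₀ ∈ ThetaPrime ν) {l : ℝ} (hl : θ₀ < l) : ContinuousAt (deriv (psi α β ν)) l := by
  obtain ⟨S, hS, B, hB, hSB⟩ := levyTermDeriv_dominated hν hθ₀ hl
  have key : ContinuousAt (fun m => ∫ x, levyTermDeriv m x ∂ν) l := by
    refine continuousAt_of_dominated
      (Eventually.of_forall fun m => (measurable_levyTermDeriv m).aestronglyMeasurable)
      (bound := B) ?_ hB (Eventually.of_forall fun x => ?_)
    · filter_upwards [hS] with m hm
      filter_upwards [hSB] with x hx using hx m hm
    · unfold levyTermDeriv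
      fun_prop
  have h2 : ContinuousAt (fun m => α + 2 * β * m + ∫ x, levyTermDeriv m x ∂ν) l :=
    ContinuousAt.add (by fun_prop) key
  refine h2.congr ?_
  filter_upwards [Ioi_mem_nhds hl] with m hm using (hasDerivAt_psi α β hν hθ₀ hm).deriv.symm

theorem monotoneOn_deriv_psi (α : ℝ) {β : ℝ} (hβ : 0 ≤ β) {ν : Measure ℝ} (hν : IsLevyMeasure ν)
    {θ₀ : ℝ} (hθ₀ : θ₀ ∈ ThetaPrime ν) : MonotoneOn (deriv (psi α β ν)) (Ioi θ₀) := by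
  intro l hl m hm hlm
  rw [(hasDerivAt_psi α β hν hθ₀ hl).deriv, (hasDerivAt_psi α β hν hθ₀ hm).deriv]
  have : ∫ x, levyTermDeriv l x ∂ν ≤ ∫ x, levyTermDeriv m x ∂ν := by
    refine integral_mono_ae (integrable_levyTermDeriv hν hθ₀ hl)
      (integrable_levyTermDeriv hν hθ₀ hm) ?_
    filter_upwards [ae_pos_of_isLevyMeasure hν] with x hx
    have : Real.exp (-(m * x)) ≤ Real.exp (-(l * x)) := by gcongr
    simp only [levyTermDeriv]
    nlinarith
  nlinarith

/-! ### Growth at infinity and the root `qTheta` -/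

/-- Grey's condition rules out that the convex function `ψ` is eventually nonincreasing, hence it
grows at least linearly. -/
theorem tendsto_psi_atTop {α β : ℝ} (hβ : 0 ≤ β) {ν : Measure ℝ} (hν : IsLevyMeasure ν)
    (h2 : Assumption2 α β ν) {θ₀ : ℝ} (hθ₀ : θ₀ ∈ ThetaPrime ν) :
    Tendsto (psi α β ν) atTop atTop := by
  obtain ⟨M, hpos, hfin⟩ := h2
  have hd : ∀ l, θ₀ < l → HasDerivAt (psi α β ν) (deriv (psi α β ν) l) l := fun l hl =>
    (hasDerivAt_psi α β hν hθ₀ hl).differentiableAt.hasDerivAt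
  set N := max M (θ₀ + 1) with hN
  have hMN : M ≤ N := le_max_left _ _
  have hθN : θ₀ < N := by linarith [le_max_right M (θ₀ + 1)]
  have hcont : ∀ a, N ≤ a → ContinuousOn (psi α β ν) (Ici a) := fun a ha x hx =>
    (hd x (hθN.trans_le (ha.trans hx))).continuousAt.continuousWithinAt
  have hdiff : ∀ a, N ≤ a → DifferentiableOn ℝ (psi α β ν) (interior (Ici a)) := fun a ha x hx =>
    (hd x (hθN.trans_le (ha.trans (interior_subset hx)))).differentiableAt.differentiableWithinAt
  obtain ⟨u, hu, hu'⟩ : ∃ u, N ≤ u ∧ 0 < deriv (psi α β ν) u := by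
    by_contra! hcon
    have hanti : AntitoneOn (psi α β ν) (Ici N) :=
      antitoneOn_of_deriv_nonpos (convex_Ici N) (hcont N le_rfl) (hdiff N le_rfl)
        fun x hx => hcon x (interior_subset hx)
    apply hfin
    rw [eq_top_iff]
    have hc : 0 < 1 / psi α β ν N := one_div_pos.2 (hpos N hMN)
    calc (⊤ : ENNReal) = ∫⁻ _ in Ioi N, ENNReal.ofReal (1 / psi α β ν N) := by
          rw [lintegral_const, Measure.restrict_apply_univ, Real.volume_Ioi, ENNReal.mul_top]
          exact (ENNReal.ofReal_pos.2 hc).ne'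
      _ ≤ ∫⁻ x in Ioi N, ENNReal.ofReal (1 / psi α β ν x) := by
          refine setLIntegral_mono' measurableSet_Ioi fun x hx => ?_
          have hx : N < x := hx
          exact ENNReal.ofReal_le_ofReal (one_div_le_one_div_of_le (hpos x (hMN.trans hx.le))
            (hanti self_mem_Ici hx.le hx.le))
      _ ≤ _ := lintegral_mono_set (Ioi_subset_Ioi hMN)
  have hlin : ∀ x, u ≤ x → psi α β ν u + deriv (psi α β ν) u * (x - u) ≤ psi α β ν x := by
    intro x hx
    have := (convex_Ici u).mul_sub_le_image_sub_of_le_deriv (hcont u hu) (hdiff u hu)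
      (C := deriv (psi α β ν) u) (fun y hy => monotoneOn_deriv_psi α hβ hν hθ₀
        (hθN.trans_le hu) (hθN.trans_le (hu.trans (interior_subset hy))) (interior_subset hy))
      u self_mem_Ici x hx hx
    linarith
  refine tendsto_atTop_mono' atTop ((eventually_ge_atTop u).mono hlin) ?_
  exact tendsto_atTop_add_const_left _ _
    ((tendsto_atTop_add_const_right _ (-u) tendsto_id).const_mul_atTop hu')

theorem tendsto_psiShift_atTop {α β : ℝ} {ν : Measure ℝ}
    (hψ : Tendsto (psi α β ν) atTop atTop) (θ : ℝ) :
    Tendsto (psiShift α β ν θ) atTop atTop := by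
  exact tendsto_atTop_add_const_right _ _
    (hψ.comp (tendsto_atTop_add_const_right atTop θ tendsto_id))

/-- As `ψ_θ → ∞`, the set defining `qTheta` is bounded, so its supremum is genuine. -/
theorem qTheta_spec {α β : ℝ} {ν : Measure ℝ} (hψ : Tendsto (psi α β ν) atTop atTop) (θ : ℝ) :
    0 ≤ qTheta α β ν θ ∧ ∀ r, qTheta α β ν θ < r → 0 < psiShift α β ν θ r := by
  obtain ⟨R, hR⟩ := eventually_atTop.1
    ((tendsto_psiShift_atTop hψ θ).eventually (eventually_gt_atTop 0))
  have hbdd : BddAbove ({0} ∪ {r : ℝ | 0 < r ∧ psiShift α β ν θ r ≤ 0}) := by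
    refine ⟨max R 0, ?_⟩
    rintro r (hr | ⟨-, hr⟩)
    · rw [mem_singleton_iff.1 hr]; exact le_max_right _ _
    · by_contra! hlt
      exact absurd (hR r ((le_max_left _ _).trans hlt.le)) (not_lt.2 hr)
  have h0 : 0 ≤ qTheta α β ν θ := le_csSup hbdd (by simp)
  refine ⟨h0, fun r hr => ?_⟩
  by_contra! hcon
  exact absurd (le_csSup hbdd (Or.inr ⟨h0.trans_lt hr, hcon⟩)) (not_le.2 hr)

/-! ### The inverse of a convergent tail integral -/

/-- If `G y = ∫_y^∞ dr / g r` and `b` inverts `G`, then `b` solves `b' = -g (b)`. Positivity of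
`G (b a) = a` forces the tail integral to converge, so no separate hypothesis is needed. -/
theorem tailInverse_spec {g b : ℝ → ℝ} {q : ℝ} (hg : ContinuousOn g (Ioi q))
    (hpos : ∀ r, q < r → 0 < g r)
    (hb : ∀ a, 0 < a → q < b a ∧ ∫ r in Ioi (b a), (g r)⁻¹ = a) :
    (∀ a, 0 < a → HasDerivAt b (-g (b a)) a) ∧ Tendsto b (𝓝[>] 0) atTop := by
  have hinv : ContinuousOn (fun r => (g r)⁻¹) (Ioi q) := hg.inv₀ fun r hr => (hpos r hr).ne'
  have hii : ∀ y z, q < y → q < z → IntervalIntegrable (fun r => (g r)⁻¹) volume y z :=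
    fun y z hy hz => (hinv.mono fun r hr => (lt_min hy hz).trans_le hr.1).intervalIntegrable
  have hint : ∀ y, q < y → IntegrableOn (fun r => (g r)⁻¹) (Ioi y) := by
    intro y hy
    obtain ⟨hq, h1⟩ := hb 1 one_pos
    have hI : IntegrableOn (fun r => (g r)⁻¹) (Ioi (b 1)) := by
      by_contra hcon
      rw [integral_undef hcon] at h1
      exact zero_ne_one h1
    rcases le_total y (b 1) with hle | hle
    · rw [← Ioc_union_Ioi_eq_Ioi hle]
      exact ((intervalIntegrable_iff_integrableOn_Ioc_of_le hle).1 (hii _ _ hy hq)).union hI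
    · exact hI.mono_set (Ioi_subset_Ioi hle)
  set G : ℝ → ℝ := fun y => ∫ r in Ioi y, (g r)⁻¹ with hG
  have hGb : ∀ a, 0 < a → G (b a) = a := fun a ha => (hb a ha).2
  have hGsub : ∀ y z, q < y → q < z → G z = G y - ∫ r in y..z, (g r)⁻¹ := fun y z hy hz => by
    rw [← intervalIntegral.integral_Ioi_sub_Ioi' (hint y hy) (hint z hz)]
    simp [hG]
  have hGanti : StrictAntiOn G (Ioi q) := by
    intro y hy z hz hyz
    have := intervalIntegral.intervalIntegral_pos_of_pos_on (hii y z hy hz)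
      (fun r hr => inv_pos.2 (hpos r (lt_trans hy hr.1))) hyz
    rw [hGsub y z hy hz]
    linarith
  have hGpos : ∀ y, q < y → 0 < G y := fun y hy => by
    have hy1 : q < y + 1 := by linarith
    have h0 : 0 ≤ G (y + 1) := setIntegral_nonneg measurableSet_Ioi
      fun r hr => (inv_pos.2 (hpos r (lt_trans hy1 hr))).le
    exact h0.trans_lt (hGanti hy hy1 (by linarith))
  have hbG : ∀ y, q < y → b (G y) = y := fun y hy =>
    hGanti.injOn (hb _ (hGpos y hy)).1 hy (hGb _ (hGpos y hy))
  have hbanti : StrictAntiOn b (Ioi 0) := by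
    intro a ha a' ha' haa
    by_contra! hcon
    have := hGanti.antitoneOn (hb a ha).1 (hb a' ha').1 hcon
    rw [hGb a ha, hGb a' ha'] at this
    exact absurd haa (not_lt.2 this)
  have hGderiv : ∀ y, q < y → HasDerivAt G (-(g y)⁻¹) y := by
    intro y hy
    have hn : Ioi q ∈ 𝓝 y := Ioi_mem_nhds hy
    have h1 : HasDerivAt (fun z => G y - ∫ r in y..z, (g r)⁻¹) (-(g y)⁻¹) y :=
      (intervalIntegral.integral_hasDerivAt_right (hii y y hy hy)
        (hinv.stronglyMeasurableAtFilter isOpen_Ioi y hy) (hinv.continuousAt hn)).const_sub _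
    refine h1.congr_of_eventuallyEq ?_
    filter_upwards [hn] with z hz using hGsub y z hy hz
  have hbcont : ∀ a, 0 < a → ContinuousAt b a := by
    intro a ha
    -- the continuity criterion for monotone functions is applied to `-b`
    have hmono : StrictMonoOn (fun a => -b a) (Ioi 0) := fun x hx y hy hxy =>
      neg_lt_neg (hbanti hx hy hxy)
    have hc : ContinuousAt (fun a => -b a) a := by
      refine hmono.continuousAt_of_image_mem_nhds (Ioi_mem_nhds ha) ?_
      filter_upwards [Iio_mem_nhds (neg_lt_neg (hb a ha).1)] with y hy
      have hy' : q < -y := by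
        have : y < -q := hy
        linarith
      exact ⟨G (-y), hGpos _ hy', by simp [hbG _ hy']⟩
    exact hc.neg.congr (Eventually.of_forall fun x => neg_neg (b x))
  refine ⟨fun a ha => ?_, ?_⟩
  · have h := HasDerivAt.of_local_left_inverse (hbcont a ha) (hGderiv (b a) (hb a ha).1)
      (neg_ne_zero.2 (inv_ne_zero (hpos _ (hb a ha).1).ne'))
      (by filter_upwards [Ioi_mem_nhds ha] with x hx using hGb x hx)
    simpa [inv_neg] using h
  · rw [tendsto_atTop]
    intro R
    set y := max R (q + 1) with hy
    have hqy : q < y := by linarith [le_max_right R (q + 1)]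
    filter_upwards [Ioo_mem_nhdsGT (hGpos y hqy)] with a ha
    have := hbanti ha.1 (hGpos y hqy) ha.2
    rw [hbG y hqy] at this
    exact (le_max_left _ _).trans this.le

/-! ### Densities given by a hazard rate -/

/-- A nonnegative continuous hazard rate on `[0, h)` whose primitive `H` diverges at `h` defines a
probability density: `k exp (-∫ k)` is the derivative of `-exp (H 0 - H t)`, which rises from `-1`
to `0`. -/
theorem hazard_density {k H : ℝ → ℝ} {h : ℝ} (hh : 0 < h)
    (hk : ContinuousOn k (Iio h)) (hk0 : ∀ t, t < h → 0 ≤ k t)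
    (hH : ∀ t, t < h → HasDerivAt H (k t) t) (hlim : Tendsto H (𝓝[<] h) atTop) :
    IntegrableOn (fun t => k t * Real.exp (-∫ r in (0:ℝ)..t, k r)) (Ioo 0 h) ∧
      ∫ t in Ioo 0 h, k t * Real.exp (-∫ r in (0:ℝ)..t, k r) = 1 := by
  have hprim : ∀ t ∈ Ioo 0 h, ∫ r in (0:ℝ)..t, k r = H t - H 0 := by
    intro t ht
    have hsub : uIcc 0 t ⊆ Iio h := by
      rw [uIcc_of_le ht.1.le]
      exact fun x hx => hx.2.trans_lt ht.2
    exact intervalIntegral.integral_eq_sub_of_hasDerivAt (fun x hx => hH x (hsub hx))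
      (hk.mono hsub).intervalIntegrable
  -- the primitive, extended to the right endpoint by its limit
  set F : ℝ → ℝ := fun t => if t < h then -Real.exp (H 0 - H t) else 0 with hF
  have hFd : ∀ t, t < h → HasDerivAt F (k t * Real.exp (H 0 - H t)) t := by
    intro t ht
    have h1 : HasDerivAt (fun t => -Real.exp (H 0 - H t)) (k t * Real.exp (H 0 - H t)) t := by
      refine ((hH t ht).const_sub (H 0)).exp.neg.congr_deriv ?_
      ring
    refine h1.congr_of_eventuallyEq ?_
    filter_upwards [Iio_mem_nhds ht] with x hx
    exact if_pos hx
  have hFlim : Tendsto F (𝓝[<] h) (𝓝 0) := by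
    have h1 : Tendsto (fun t => -Real.exp (H 0 - H t)) (𝓝[<] h) (𝓝 (-0)) := by
      refine (Real.tendsto_exp_atBot.comp ?_).neg
      exact tendsto_atBot_add_const_left _ _ (tendsto_neg_atTop_atBot.comp hlim)
    rw [neg_zero] at h1
    refine h1.congr' ?_
    filter_upwards [self_mem_nhdsWithin] with x hx
    exact (if_pos hx).symm
  have hFh : F h = 0 := if_neg (lt_irrefl h)
  have hFc : ContinuousOn F (Icc 0 h) := by
    intro t ht
    rcases ht.2.lt_or_eq with hlt | rfl
    · exact (hFd t hlt).continuousAt.continuousWithinAt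
    · have h1 : ContinuousWithinAt F (Iio t) t := by
        rw [ContinuousWithinAt, hFh]
        exact hFlim
      exact (continuousWithinAt_Iio_iff_Iic.1 h1).mono fun x hx => hx.2
  have hint := intervalIntegral.integrableOn_deriv_of_nonneg hFc (fun t ht => hFd t ht.2)
    fun t ht => mul_nonneg (hk0 t ht.2) (Real.exp_pos _).le
  have hval := intervalIntegral.integral_eq_sub_of_hasDerivAt_of_le hh.le hFc
    (fun t ht => hFd t ht.2) ((intervalIntegrable_iff_integrableOn_Ioc_of_le hh.le).2 hint)
  have hF0 : F 0 = -1 := by simp [hF, hh]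
  rw [hFh, hF0, intervalIntegral.integral_of_le hh.le, integral_Ioc_eq_integral_Ioo] at hval
  have heq : EqOn (fun t => k t * Real.exp (H 0 - H t))
      (fun t => k t * Real.exp (-∫ r in (0:ℝ)..t, k r)) (Ioo 0 h) := by
    intro t ht
    simp only [hprim t ht, neg_sub]
  refine ⟨(hint.mono_set Ioo_subset_Ioc_self).congr_fun heq measurableSet_Ioo, ?_⟩
  rw [← setIntegral_congr_fun measurableSet_Ioo heq, hval]
  norm_num

/-! ### The density -/

/-- Lemma 4.3: for `θ > θ_∞` and `h > 0`, the function
`f(t) = γ_θ(b^θ(h-t)) exp(-∫_0^t γ_θ(b^θ(h-r)) dr)` is a probability density on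
`[0,h)`, and `∫_0^h e^{-ψ'(θ)t} f(t) dt < ∞`. -/
theorem density_on_Ioo_and_exp_integrable (α β : ℝ) (hβ : 0 ≤ β)
    (ν : MeasureTheory.Measure ℝ) (hν : IsLevyMeasure ν)
    (h1 : Assumption1 α β ν) (h2 : Assumption2 α β ν)
    (θ : ℝ) (hθ : thetaInf ν < (θ : EReal))
    (h : ℝ) (hh : 0 < h) (b : ℝ → ℝ)
    (hb : ∀ a, 0 < a → qTheta α β ν θ < b a ∧
      ∫ r in Set.Ioi (b a), (psiShift α β ν θ r)⁻¹ = a) :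
    MeasureTheory.IntegrableOn
      (fun t => gammaTheta α β ν θ (b (h - t)) *
        Real.exp (-∫ r in (0:ℝ)..t, gammaTheta α β ν θ (b (h - r))))
      (Set.Ioo 0 h) ∧
    (∫ t in Set.Ioo (0:ℝ) h, gammaTheta α β ν θ (b (h - t)) *
        Real.exp (-∫ r in (0:ℝ)..t, gammaTheta α β ν θ (b (h - r)))) = 1 ∧
    MeasureTheory.IntegrableOn
      (fun t => Real.exp (-(deriv (psi α β ν) θ) * t) *
        (gammaTheta α β ν θ (b (h - t)) *
          Real.exp (-∫ r in (0:ℝ)..t, gammaTheta α β ν θ (b (h - r)))))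
      (Set.Ioo 0 h) := by
  obtain ⟨θ₀, hθ₀, hlt⟩ : ∃ θ₀ ∈ ThetaPrime ν, θ₀ < θ := by
    simpa [thetaInf, iInf_lt_iff] using hθ
  have hψ := tendsto_psi_atTop hβ hν h2 hθ₀
  obtain ⟨hq0, hpos⟩ := qTheta_spec hψ θ
  set q := qTheta α β ν θ with hq
  have hdom : ∀ r, q < r → θ₀ < r + θ := fun r hr => by linarith
  have hgd : ∀ r, q < r →
      HasDerivAt (psiShift α β ν θ) (deriv (psi α β ν) (r + θ)) r := fun r hr =>
    ((hasDerivAt_psi α β hν hθ₀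
      (hdom r hr)).differentiableAt.hasDerivAt.comp_add_const r θ).sub_const _
  obtain ⟨hbd, hblim⟩ := tailInverse_spec
    (fun r hr => (hgd r hr).continuousAt.continuousWithinAt) hpos hb
  have hsub : ∀ t, t < h → 0 < h - t := fun t ht => sub_pos.2 ht
  have hud : ∀ t, t < h →
      HasDerivAt (fun t => b (h - t)) (psiShift α β ν θ (b (h - t))) t := fun t ht => by
    simpa using (hbd _ (hsub t ht)).comp_const_sub h t
  have hulim : Tendsto (fun t => b (h - t)) (𝓝[<] h) atTop := by
    refine hblim.comp (tendsto_nhdsWithin_iff.2 ⟨?_, ?_⟩)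
    · have : Tendsto (fun t => h - t) (𝓝 h) (𝓝 (h - h)) := tendsto_const_nhds.sub tendsto_id
      rw [sub_self] at this
      exact this.mono_left nhdsWithin_le_nhds
    · filter_upwards [self_mem_nhdsWithin] with t ht using hsub t ht
  -- the derivative of `log (ψ_θ (b (h - t)))` is `ψ' (b (h - t) + θ)` by the equation for `b`
  have key := hazard_density (k := fun t => gammaTheta α β ν θ (b (h - t)))
    (H := fun t => Real.log (psiShift α β ν θ (b (h - t))) - deriv (psi α β ν) θ * t) hh
    (fun t ht => by
      have hc : ContinuousAt (fun t => b (h - t)) t := (hud t ht).continuousAt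
      have h1 : ContinuousAt (fun t => deriv (psi α β ν) (b (h - t) + θ)) t :=
        ContinuousAt.comp (f := fun t => b (h - t) + θ)
          (continuousAt_deriv_psi α β hν hθ₀ (hdom _ (hb _ (hsub t ht)).1))
          (hc.add continuousAt_const)
      exact (h1.sub continuousAt_const).continuousWithinAt)
    (fun t ht => by
      have hr := (hb _ (hsub t ht)).1
      exact sub_nonneg.2 (monotoneOn_deriv_psi α hβ hν hθ₀ hlt (hdom _ hr) (by linarith)))
    (fun t ht => by
      have hr := (hb _ (hsub t ht)).1
      have hc : HasDerivAt (fun t => psiShift α β ν θ (b (h - t)))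
          (deriv (psi α β ν) (b (h - t) + θ) * psiShift α β ν θ (b (h - t))) t :=
        HasDerivAt.comp (h₂ := psiShift α β ν θ) t (hgd _ hr) (hud t ht)
      have h1 := (hc.log (hpos _ hr).ne').sub
        ((hasDerivAt_id t).const_mul (deriv (psi α β ν) θ))
      refine h1.congr_deriv ?_
      have := (hpos _ hr).ne'
      simp only [gammaTheta, mul_one]
      rw [mul_div_assoc, div_self this, mul_one])
    (by
      have h1 : Tendsto (fun t => Real.log (psiShift α β ν θ (b (h - t)))) (𝓝[<] h) atTop :=
        Real.tendsto_log_atTop.comp ((tendsto_psiShift_atTop hψ θ).comp hulim)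
      have h2 : Tendsto (fun t => -(deriv (psi α β ν) θ * t)) (𝓝[<] h)
          (𝓝 (-(deriv (psi α β ν) θ * h))) :=
        ((tendsto_id.const_mul _).neg).mono_left nhdsWithin_le_nhds
      exact h1.atTop_add h2)
  refine ⟨key.1, key.2, ?_⟩
  -- on the bounded interval the exponential factor is bounded
  refine Integrable.bdd_mul (c := Real.exp (|deriv (psi α β ν) θ| * h)) key.1
    (by fun_prop) ?_
  filter_upwards [ae_restrict_mem measurableSet_Ioo] with t ht
  rw [Real.norm_eq_abs, Real.abs_exp]
  gcongr
  · exact ht.1.le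
  · exact neg_le_abs _
  · exact ht.2.le
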